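/- A continuous function Φ : ℤ_p → ℤ_p with Mahler expansion Φ = Σ_{k∈ℕ} a_k · C(x,k) (a_k ∈ ℤ_p, a_k → 0) is congruence preserving if and only if lcm(1,...,k) divides a_k in ℤ_p for all k, equivalently p^i divides a_k whenever p^i ≤ k. -/

import Mathlib

/-!
Write `Δ` for the forward difference with step `1`, so that `a k = Δ^k Φ 0`.

*Congruence preserving implies `p ^ i ∣ a k` for `p ^ i ≤ k`.* With `R = p ^ i` and `E = 1 + Δ` the
shift, expanding `E ^ R` gives
`Δ^(n + R) Φ 0 = Δ^n (Φ (· + R) - Φ) 0 - ∑_{0 < j < R} C(R, j) Δ^(n + j) Φ 0`.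
The first term is an integral combination of differences `Φ (x + R) - Φ x`, each divisible by `R`.
For the others, `R ∣ j * C(R, j)`, so `R ∣ p ^ v * C(R, j)` where `p ^ v` is the exact power of `p`
in `j`; as `p ^ v ≤ j < R`, induction on `i` gives `p ^ v ∣ Δ^(n + j) Φ 0`
(`pow_dvd_fwdDiff_iter`).

*`lcm(1, …, k) ∣ a k` implies congruence preserving.* By Vandermonde,
`C(y + h, k) - C(y, k) = ∑_{0 < j ≤ k} C(h, j) C(y, k - j)`, and `j * C(h, j) = h * C(h - 1, j - 1)`.
Since `j ∣ a k`, every term of the difference of the two Mahler series is divisible by `h`, and the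
ultrametric inequality passes this to the sum.

*The two divisibility conditions agree* because integers prime to `p` are units in `ℤ_[p]`, so
divisibility by `n` only depends on the power of `p` in `n`, which for an lcm is a maximum.
-/

/-- `lcm(1, 2, ..., k)`, with `lcmUpTo 0 = 1` by convention. -/
def lcmUpTo (k : ℕ) : ℕ := (Finset.Icc 1 k).lcm id

open Finset
open scoped fwdDiff

/-- Integers prime to `p` are units in `ℤ_[p]`. -/
lemma natCast_dvd_iff_pow_dvd {p : ℕ} [hp : Fact p.Prime] {n : ℕ} (hn : n ≠ 0) (c : ℤ_[p]) :
    (n : ℤ_[p]) ∣ c ↔ (p : ℤ_[p]) ^ (n.factorization p) ∣ c := by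
  have hu : IsUnit ((n / p ^ n.factorization p : ℕ) : ℤ_[p]) := by
    rw [PadicInt.isUnit_iff, PadicInt.norm_natCast_eq_one_iff]
    exact Nat.coprime_ordCompl hp.out hn
  have h : (n : ℤ_[p]) =
      (p : ℤ_[p]) ^ (n.factorization p) * ((n / p ^ n.factorization p : ℕ) : ℤ_[p]) := by
    exact_mod_cast (Nat.ordProj_mul_ordCompl_eq_self n p).symm
  rw [h, hu.mul_right_dvd]

lemma lcm_natCast_dvd {p : ℕ} [hp : Fact p.Prime] {c : ℤ_[p]} {m n : ℕ} (hm : m ≠ 0) (hn : n ≠ 0)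
    (hmc : (m : ℤ_[p]) ∣ c) (hnc : (n : ℤ_[p]) ∣ c) : ((Nat.lcm m n : ℕ) : ℤ_[p]) ∣ c := by
  rw [natCast_dvd_iff_pow_dvd hm] at hmc
  rw [natCast_dvd_iff_pow_dvd hn] at hnc
  rw [natCast_dvd_iff_pow_dvd (Nat.lcm_ne_zero hm hn), Nat.factorization_lcm hm hn,
    Finsupp.sup_apply]
  rcases max_choice (m.factorization p) (n.factorization p) with h | h <;> rw [h] <;> assumption

lemma finset_lcm_natCast_dvd {p : ℕ} [hp : Fact p.Prime] {c : ℤ_[p]} (s : Finset ℕ)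
    (hs : ∀ j ∈ s, j ≠ 0 ∧ (j : ℤ_[p]) ∣ c) :
    s.lcm id ≠ 0 ∧ ((s.lcm id : ℕ) : ℤ_[p]) ∣ c := by
  induction s using Finset.induction_on with
  | empty => simp
  | insert j s _ ih =>
    obtain ⟨h0, hc⟩ := ih fun i hi ↦ hs i (mem_insert_of_mem hi)
    obtain ⟨hj0, hjc⟩ := hs j (mem_insert_self _ _)
    rw [Finset.lcm_insert]
    exact ⟨Nat.lcm_ne_zero hj0 h0, lcm_natCast_dvd hj0 h0 hjc hc⟩

/-- If every power of `p` up to `k` divides `c` in `ℤ_[p]`, so does every integer up to `k`. -/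
lemma natCast_dvd_of_pow_dvd {p : ℕ} [hp : Fact p.Prime] {c : ℤ_[p]} {k j : ℕ}
    (h : ∀ i, p ^ i ≤ k → (p : ℤ_[p]) ^ i ∣ c) (hj : j ≠ 0) (hjk : j ≤ k) : (j : ℤ_[p]) ∣ c :=
  (natCast_dvd_iff_pow_dvd hj c).2 (h _ ((Nat.ordProj_le p hj).trans hjk))

lemma lcmUpTo_dvd_iff {p : ℕ} [hp : Fact p.Prime] {c : ℤ_[p]} {k : ℕ} :
    ((lcmUpTo k : ℕ) : ℤ_[p]) ∣ c ↔ ∀ i, p ^ i ≤ k → (p : ℤ_[p]) ^ i ∣ c := by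
  constructor
  · intro h i hi
    have : p ^ i ∣ lcmUpTo k :=
      Finset.dvd_lcm (f := id) (mem_Icc.2 ⟨Nat.pos_of_ne_zero (by simp [hp.out.ne_zero]), hi⟩)
    exact dvd_trans (by exact_mod_cast Nat.cast_dvd_cast (α := ℤ_[p]) this) h
  · intro h
    refine (finset_lcm_natCast_dvd _ fun j hj ↦ ?_).2
    rw [mem_Icc] at hj
    exact ⟨by omega, natCast_dvd_of_pow_dvd h (by omega) hj.2⟩

/-- The `n`-th forward difference of the expansion `E ^ R = (1 + Δ) ^ R`, solved for its top
term. -/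
lemma fwdDiff_iter_add_eq {p : ℕ} [hp : Fact p.Prime] (f : ℤ_[p] → ℤ_[p]) (n R : ℕ) (hR : 1 ≤ R) :
    (Δ_[1])^[n + R] f 0 =
      ∑ k ∈ range (n + 1), ((-1 : ℤ) ^ (n - k) * n.choose k) • (f (k + R) - f k)
      - ∑ j ∈ range (R - 1), R.choose (j + 1) • (Δ_[1])^[n + (j + 1)] f 0 := by
  obtain ⟨r, rfl⟩ : ∃ r, R = r + 1 := ⟨R - 1, by omega⟩
  have h := shift_eq_sum_fwdDiff_iter 1 ((Δ_[1])^[n] f) (r + 1) 0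
  rw [sum_range_succ, sum_range_succ'] at h
  simp only [← Function.iterate_add_apply, Nat.choose_self, one_smul, Nat.choose_zero_right,
    zero_add, nsmul_one] at h
  simp only [smul_sub, sum_sub_distrib]
  have h1 := fwdDiff_iter_eq_sum_shift (1 : ℤ_[p]) f n ((r + 1 : ℕ) : ℤ_[p])
  have h2 := fwdDiff_iter_eq_sum_shift (1 : ℤ_[p]) f n 0
  simp only [nsmul_one, zero_add] at h1 h2
  simp only [add_comm _ ((r + 1 : ℕ) : ℤ_[p])]
  rw [← h1, ← h2, h]
  simp only [Nat.add_sub_cancel, add_comm n]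
  ring

lemma pow_dvd_fwdDiff_iter {p : ℕ} [hp : Fact p.Prime] (f : ℤ_[p] → ℤ_[p])
    (hf : ∀ x y : ℤ_[p], x - y ∣ f x - f y) (i : ℕ) :
    ∀ n : ℕ, (p : ℤ_[p]) ^ i ∣ (Δ_[1])^[n + p ^ i] f 0 := by
  induction i using Nat.strong_induction_on with
  | _ i ih =>
    intro n
    rw [fwdDiff_iter_add_eq f n (p ^ i) (Nat.one_le_pow _ _ hp.out.pos)]
    refine dvd_sub (dvd_sum fun k _ ↦ ?_) (dvd_sum fun j hj ↦ ?_)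
    · rw [zsmul_eq_mul]
      refine Dvd.dvd.mul_left ?_ _
      simpa using hf (k + (p ^ i : ℕ)) k
    · have hj' : j + 1 < p ^ i := by rw [mem_range] at hj; omega
      set v := (j + 1).factorization p with hv
      have hvj : p ^ v ≤ j + 1 := Nat.ordProj_le p (by omega)
      have hvi : v < i := (Nat.pow_lt_pow_iff_right hp.out.one_lt).1 (hvj.trans_lt hj')
      obtain ⟨d, hd⟩ : (p : ℤ_[p]) ^ v ∣ (Δ_[1])^[n + (j + 1)] f 0 := by
        have := ih v hvi (n + (j + 1) - p ^ v)
        rwa [Nat.sub_add_cancel (by omega)] at this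
      obtain ⟨e, he⟩ : ((j + 1 : ℕ) : ℤ_[p]) ∣ (p : ℤ_[p]) ^ v :=
        (natCast_dvd_iff_pow_dvd (by omega) _).2 dvd_rfl
      have hc : ((j + 1 : ℕ) : ℤ_[p]) * ((p ^ i).choose (j + 1) : ℕ) =
          (p : ℤ_[p]) ^ i * ((p ^ i - 1).choose j : ℕ) := by
        have := Nat.add_one_mul_choose_eq (p ^ i - 1) j
        rw [Nat.sub_add_cancel (Nat.one_le_pow _ _ hp.out.pos)] at this
        rw [mul_comm]
        exact_mod_cast this.symm
      rw [nsmul_eq_mul, hd, he]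
      exact ⟨((p ^ i - 1).choose j : ℕ) * e * d, by linear_combination e * d * hc⟩

/-- The absorption identity `j * C(h, j) = h * C(h - 1, j - 1)`, as a divisibility. -/
lemma dvd_natCast_mul_choose {p : ℕ} [hp : Fact p.Prime] (h : ℤ_[p]) {j : ℕ} (hj : j ≠ 0) :
    h ∣ (j : ℤ_[p]) * Ring.choose h j := by
  obtain ⟨i, rfl⟩ := Nat.exists_eq_succ_of_ne_zero hj
  refine ⟨Ring.choose (h - 1) i, ?_⟩
  -- Both sides are continuous in `h`, so it suffices to check the identity on `ℕ`.
  refine congrFun (f := fun h : ℤ_[p] ↦ ((i.succ : ℕ) : ℤ_[p]) * Ring.choose h i.succ)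
    (g := fun h ↦ h * Ring.choose (h - 1) i)
    (PadicInt.denseRange_natCast.equalizer (by fun_prop)
      (continuous_id.mul ((PadicInt.continuous_choose i).comp (continuous_id.sub continuous_const)))
      (funext fun n ↦ ?_)) h
  rcases n with _ | n
  · simp [Ring.choose_zero_succ]
  · have := Nat.add_one_mul_choose_eq n i
    simp only [Function.comp_apply, Nat.succ_eq_add_one, Ring.choose_natCast]
    rw [show ((n + 1 : ℕ) : ℤ_[p]) - 1 = n by push_cast; ring, Ring.choose_natCast, mul_comm]
    exact_mod_cast this.symm

lemma sub_dvd_mul_choose_sub {p : ℕ} [hp : Fact p.Prime] {c : ℤ_[p]} {k : ℕ}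
    (hc : ((lcmUpTo k : ℕ) : ℤ_[p]) ∣ c) (x y : ℤ_[p]) :
    x - y ∣ c * Ring.choose x k - c * Ring.choose y k := by
  obtain ⟨h, rfl⟩ : ∃ h, x = h + y := ⟨x - y, by ring⟩
  rw [add_sub_cancel_right, Ring.add_choose_eq k (Commute.all h y),
    Nat.sum_antidiagonal_eq_sum_range_succ (fun i j ↦ Ring.choose h i * Ring.choose y j),
    sum_range_succ', Ring.choose_zero_right, one_mul, Nat.sub_zero, mul_add, add_sub_cancel_right,
    mul_sum]
  refine dvd_sum fun j hj ↦ ?_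
  have hjl : j + 1 ∣ lcmUpTo k :=
    Finset.dvd_lcm (f := id) (mem_Icc.2 ⟨by omega, by rw [mem_range] at hj; omega⟩)
  rw [← mul_assoc]
  refine Dvd.dvd.mul_right ((dvd_natCast_mul_choose h j.succ_ne_zero).trans ?_) _
  exact mul_dvd_mul_right ((Nat.cast_dvd_cast hjl).trans hc) _

lemma norm_le_norm_iff_dvd {p : ℕ} [hp : Fact p.Prime] (x y : ℤ_[p]) : ‖x‖ ≤ ‖y‖ ↔ y ∣ x := by
  constructor
  · intro h
    rcases ValuationRing.dvd_total y x with hd | ⟨c, rfl⟩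
    · exact hd
    · rcases eq_or_ne x 0 with rfl | hx
      · simp
      · have hc : IsUnit c := by
          rw [PadicInt.isUnit_iff]
          refine le_antisymm (PadicInt.norm_le_one c) ?_
          rw [norm_mul] at h
          exact le_of_mul_le_mul_left (by rwa [mul_one]) (norm_pos_iff.2 hx)
        exact hc.mul_right_dvd.2 dvd_rfl
  · rintro ⟨c, rfl⟩
    rw [norm_mul]
    exact mul_le_of_le_one_right (norm_nonneg _) (PadicInt.norm_le_one c)

theorem stmt_14 (p : ℕ) [Fact p.Prime] (Φ : ℤ_[p] → ℤ_[p]) (hcont : Continuous Φ)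
    (a : ℕ → ℤ_[p]) (ha : Filter.Tendsto a Filter.atTop (nhds 0))
    (hΦ : ∀ x : ℤ_[p], Φ x = ∑' k : ℕ, a k * Ring.choose x k) :
    ((∀ x y : ℤ_[p], x - y ∣ Φ x - Φ y) ↔ ∀ k : ℕ, ((lcmUpTo k : ℕ) : ℤ_[p]) ∣ a k) ∧
    ((∀ k : ℕ, ((lcmUpTo k : ℕ) : ℤ_[p]) ∣ a k) ↔
      ∀ k i : ℕ, p ^ i ≤ k → (p : ℤ_[p]) ^ i ∣ a k) := by
  refine ⟨⟨fun h k ↦ lcmUpTo_dvd_iff.2 fun i hi ↦ ?_, fun h x y ↦ ?_⟩,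
    forall_congr' fun k ↦ lcmUpTo_dvd_iff⟩
  · have hM : Φ = PadicInt.mahlerSeries a := by
      funext x
      rw [hΦ, PadicInt.mahlerSeries_apply ha]
      simp only [mahler_apply, smul_eq_mul, mul_comm]
    have := pow_dvd_fwdDiff_iter Φ h i (k - p ^ i)
    rwa [Nat.sub_add_cancel hi, hM, PadicInt.fwdDiff_mahlerSeries ha] at this
  · have hs (z : ℤ_[p]) : Summable fun k ↦ a k * Ring.choose z k := by
      have := ContinuousMap.summable_apply (PadicInt.hasSum_mahlerSeries ha).summable z
      simpa only [PadicInt.mahlerTerm_apply, mahler_apply, smul_eq_mul, mul_comm] using this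
    rw [hΦ, hΦ, ← (hs x).tsum_sub (hs y), ← norm_le_norm_iff_dvd]
    refine IsUltrametricDist.norm_tsum_le_of_forall_le_of_nonneg (norm_nonneg _) fun k ↦ ?_
    rw [norm_le_norm_iff_dvd]
    exact sub_dvd_mul_choose_sub (h k) x y
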